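/- Let m ≥ 1 and let η_1, …, η_m : ℤ → ℝ be sequences such that for every j with 1 ≤ j ≤ m the Δ-Wronskian W_j^Δ(η_1,…,η_j)(n) is nonzero for all n ∈ ℤ. Define T_0 = id and, inductively, φ_j := T_{j−1}(η_j) and T_j := T_d(φ_j)∘T_{j−1}. Then the product of the successive transformed eigenfunctions equals the Δ-Wronskian: for all n ∈ ℤ, φ_1(n)·φ_2(n)·…·φ_m(n) = W_m^Δ(η_1,…,η_m)(n). (This encodes the transformation rule τ^{(m)}_Δ = W_m^Δ(η_1,…,η_m)·τ_Δ of the τ-function under the m-step gauge transformation, since each single step multiplies the τ-function by the generating eigenfunction.) -/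

import Mathlib

/-- Difference operator: `(Δ f) n = f (n+1) - f n`. -/
def deltaOp (f : ℤ → ℝ) : ℤ → ℝ := fun n => f (n + 1) - f n

/-- Difference-type gauge transformation operator `T_d(q) = Λ(q)∘Δ∘q⁻¹`:
`(T_d(q)f)(n) = q(n+1)·(Δ(f/q))(n)`. -/
noncomputable def Td (q f : ℤ → ℝ) : ℤ → ℝ := fun n => q (n + 1) * deltaOp (fun m => f m / q m) n

/-- Δ-Wronskian `W_k^Δ(f_1,…,f_k)(n) = det[(Δ^{i−1} f_j)(n)]_{1≤i,j≤k}`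
(here `i j : Fin k` are 0-based, so rows are `Δ^i` and columns the functions). -/
noncomputable def Wr {k : ℕ} (η : Fin k → ℤ → ℝ) (n : ℤ) : ℝ :=
  (Matrix.of fun i j : Fin k => (deltaOp^[(i : ℕ)] (η j)) n).det

/-- Iterated gauge transformation: `T_0 = id` and `T_{j+1} = T_d(T_j(η_{j+1}))∘T_j`,
where `η 0, η 1, …` are the generating sequences `η_1, η_2, …` (0-based indexing). -/
noncomputable def Titer (η : ℕ → ℤ → ℝ) : ℕ → (ℤ → ℝ) → (ℤ → ℝ)
  | 0 => id
  | j + 1 => Td (Titer η j (η j)) ∘ Titer η j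

lemma aux_Td (q f : ℤ → ℝ) (hq : ∀ n, q n ≠ 0) (n : ℤ) :
    Td q f n = f (n + 1) - q (n + 1) / q n * f n := by
  have h1 := hq n
  have h2 := hq (n + 1)
  simp only [Td, deltaOp]
  field_simp

lemma aux_shift (f : ℤ → ℝ) (l : ℕ) (n : ℤ) :
    deltaOp^[l] f (n + 1) = deltaOp^[l + 1] f n + deltaOp^[l] f n := by
  rw [Function.iterate_succ_apply']
  simp only [deltaOp]
  ring

lemma aux_expand (η : ℕ → ℤ → ℝ) (i : ℕ) (h : ∀ j < i, ∀ n, Titer η j (η j) n ≠ 0) :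
    ∃ a : ℕ → ℤ → ℝ, (∀ n, a i n = 1) ∧ (∀ l, i < l → ∀ n, a l n = 0) ∧
      ∀ f n, Titer η i f n = ∑ l ∈ Finset.range (i + 1), a l n * deltaOp^[l] f n := by
  induction i with
  | zero =>
    refine ⟨fun l _ => if l = 0 then 1 else 0, by simp, ?_, ?_⟩
    · intro l hl n
      simp [hl.ne']
    · intro f n
      simp [Titer]
  | succ i ih =>
    obtain ⟨a, ha1, ha0, ha⟩ := ih (fun j hj => h j (by omega))
    set q := Titer η i (η i) with hq
    have hq0 : ∀ n, q n ≠ 0 := h i (by omega)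
    refine ⟨fun l n => (if l = 0 then 0 else a (l - 1) (n + 1)) + a l (n + 1)
      - q (n + 1) / q n * a l n, ?_, ?_, ?_⟩
    · intro n
      simp [ha1, ha0]
    · intro l hl n
      have hl0 : l ≠ 0 := by omega
      simp [hl0, ha0 (l - 1) (by omega), ha0 l (by omega)]
    · intro f n
      have e : Titer η (i + 1) f n = Td q (Titer η i f) n := rfl
      rw [e, aux_Td q _ hq0, ha, ha]
      have s1 : ∑ l ∈ Finset.range (i + 1 + 1),
          (if l = 0 then 0 else a (l - 1) (n + 1)) * deltaOp^[l] f n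
          = ∑ l ∈ Finset.range (i + 1), a l (n + 1) * deltaOp^[l + 1] f n := by
        rw [Finset.sum_range_succ']
        simp
      have s2 : ∀ k, ∑ l ∈ Finset.range (i + 1 + 1), a l k * deltaOp^[l] f n
          = ∑ l ∈ Finset.range (i + 1), a l k * deltaOp^[l] f n := by
        intro k
        rw [Finset.sum_range_succ, ha0 (i + 1) (by omega)]
        simp
      simp only [aux_shift, mul_add, Finset.sum_add_distrib, sub_mul, add_mul,
        Finset.sum_sub_distrib, mul_assoc, ← Finset.mul_sum]
      rw [s1, s2, s2]

lemma aux_zero (η : ℕ → ℤ → ℝ) (j i : ℕ) (hji : j < i)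
    (h : ∀ n, Titer η j (η j) n ≠ 0) (n : ℤ) : Titer η i (η j) n = 0 := by
  induction i, hji using Nat.le_induction generalizing n with
  | base =>
    have e : Titer η (j + 1) (η j) n = Td (Titer η j (η j)) (Titer η j (η j)) n := rfl
    rw [e, aux_Td _ _ h]
    have := h n
    field_simp
    ring
  | succ i hi ih =>
    have e : Titer η (i + 1) (η j) n = Td (Titer η i (η i)) (Titer η i (η j)) n := rfl
    rw [e]
    simp [Td, deltaOp, ih]

lemma aux_det (η : ℕ → ℤ → ℝ) (k : ℕ) (h : ∀ j < k, ∀ n, Titer η j (η j) n ≠ 0) (n : ℤ) :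
    ∏ j ∈ Finset.range (k + 1), Titer η j (η j) n = Wr (fun i : Fin (k + 1) => η i) n := by
  have H : ∀ i : Fin (k + 1), _ := fun i =>
    aux_expand η i (fun j hj => h j (by omega))
  choose a ha1 ha0 ha using H
  let L : Matrix (Fin (k + 1)) (Fin (k + 1)) ℝ := Matrix.of fun i l => a i l n
  let M : Matrix (Fin (k + 1)) (Fin (k + 1)) ℝ := Matrix.of fun i j => Titer η i (η j) n
  have hM : M = L * (Matrix.of fun i j : Fin (k + 1) => (deltaOp^[(i : ℕ)] (η j)) n) := by
    ext i j
    simp only [M, L, Matrix.mul_apply, Matrix.of_apply]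
    rw [ha i, Fin.sum_univ_eq_sum_range (fun l => a i l n * deltaOp^[l] (η j) n) (k + 1)]
    apply Finset.sum_subset
    · intro x hx
      simp only [Finset.mem_range] at *
      omega
    · intro x _ hx
      simp only [Finset.mem_range] at hx
      rw [ha0 i x (by omega), zero_mul]
  have hL : L.det = 1 := by
    rw [Matrix.det_of_lowerTriangular L]
    · simp [L, ha1]
    · intro i j hij
      exact ha0 i j (by simpa using hij) n
  have hMd : M.det = ∏ j ∈ Finset.range (k + 1), Titer η j (η j) n := by
    rw [Matrix.det_of_upperTriangular (M := M)]
    · exact Fin.prod_univ_eq_prod_range (fun j => Titer η j (η j) n) (k + 1)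
    · intro i j hij
      have hij' : (j : ℕ) < i := by simpa using hij
      exact aux_zero η j i hij' (h j (by omega)) n
  rw [← hMd, hM, Matrix.det_mul, hL, one_mul]
  rfl

/-- The product of the successive transformed eigenfunctions `φ_{j+1} = T_j(η_{j+1})`
equals the Δ-Wronskian: `φ_1·φ_2·…·φ_m = W_m^Δ(η_1,…,η_m)` pointwise. This encodes
the τ-function transformation rule `τ^{(m)}_Δ = W_m^Δ(η_1,…,η_m)·τ_Δ`. -/
theorem stmt12 (m : ℕ) (hm : 1 ≤ m) (η : ℕ → ℤ → ℝ)
    (hW : ∀ j : ℕ, 1 ≤ j → j ≤ m → ∀ n : ℤ, Wr (fun i : Fin j => η i) n ≠ 0) :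
    ∀ n : ℤ,
      ∏ j ∈ Finset.range m, Titer η j (η j) n = Wr (fun i : Fin m => η i) n := by
  have key : ∀ k, k ≤ m → ∀ n : ℤ,
      ∏ j ∈ Finset.range k, Titer η j (η j) n = Wr (fun i : Fin k => η i) n := by
    intro k
    induction k with
    | zero =>
      intro _ n
      simp [Wr]
    | succ k ih =>
      intro hk n
      apply aux_det
      intro j hj n
      have h1 := hW k (by omega) (by omega) n
      rw [← ih (by omega) n, Finset.prod_ne_zero_iff] at h1
      exact h1 j (by simpa using hj)
  exact key m le_rfl
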